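/- arXiv:1505.01110 — 4 statements merged into one kernel-verified Lean document; each statement's English description precedes it below -/
import Mathlib

section
/- Let G₁, …, G_r be feasible bipartite graphs. For every ε > 0 there exists a natural number N such that for all n > N and every sequence s ∈ {1,…,r}ⁿ, one has IP(G_{s₁} ⊗ ⋯ ⊗ G_{s_n}) ≤ (1 + ε)ⁿ · LP(G_{s₁} ⊗ ⋯ ⊗ G_{s_n}). -/
/-!
The greedy cover algorithm shows `IP(G) ≤ (1 + log |X|) · LP(G)` for every feasible bipartite graph
`G` with nonempty left part `X` (Lovász). In a fractional cover of total weight `c`, some `y` is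
adjacent to at least `|A| / c` elements of any set `A` of uncovered vertices
(`exists_card_le_mul`), so each greedy step lowers `c * log |A|` by at least one
(`exists_greedy_cover`).

The left part of `G_{s₁} ⊗ ⋯ ⊗ G_{s_n}` has at most `M ^ n` elements with `M` independent of `s`,
so the factor `1 + log |X|` is at most `1 + n * log M`, which is eventually below `(1 + ε) ^ n`.
-/

open scoped BigOperators
open Classical

/-- `IP X Y r` is the minimum cardinality of a cover of the bipartite graph with
left part `X`, right part `Y` and adjacency relation `r`. -/
noncomputable def IP (X Y : Type*) [Fintype Y] (r : X → Y → Prop) : ℕ :=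
  sInf {n : ℕ | ∃ S : Finset Y, (∀ x : X, ∃ y ∈ S, r x y) ∧ S.card = n}

/-- `LP X Y r` is the value of the fractional cover linear program of the bipartite
graph with left part `X`, right part `Y` and adjacency relation `r`. -/
noncomputable def LP (X Y : Type*) [Fintype X] [Fintype Y] (r : X → Y → Prop) : ℝ :=
  sInf {c : ℝ | ∃ α : Y → ℝ, (∀ y, 0 ≤ α y) ∧
    (∀ x : X, 1 ≤ ∑ y : Y, if r x y then α y else 0) ∧ c = ∑ y : Y, α y}

/-- Given a family of bipartite graphs indexed by `ι` and a sequence `s : Fin n → ι`,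
this is the adjacency relation of the tensor product `G_{s 1} ⊗ ⋯ ⊗ G_{s n}`:
adjacency holds iff it holds coordinatewise. -/
def seqTensorRel {ι : Type*} {X Y : ι → Type*} (r : ∀ i, X i → Y i → Prop)
    {n : ℕ} (s : Fin n → ι) : (∀ k, X (s k)) → (∀ k, Y (s k)) → Prop :=
  fun x y => ∀ k : Fin n, r (s k) (x k) (y k)

/-- Averaging over a fractional cover `α`: some `y` is adjacent to at least a `1 / ∑ α` fraction
of the nonempty set `A`. -/
lemma exists_card_le_mul {X Y : Type*} [Fintype Y] (r : X → Y → Prop) (α : Y → ℝ)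
    (h0 : ∀ y, 0 ≤ α y) (h1 : ∀ x : X, 1 ≤ ∑ y : Y, if r x y then α y else 0)
    (A : Finset X) (hA : A.Nonempty) :
    ∃ y, (A.card : ℝ) ≤ (A.filter (fun x => r x y)).card * ∑ y, α y := by
  have hY : (Finset.univ : Finset Y).Nonempty := by
    obtain ⟨x, -⟩ := hA
    by_contra h
    rw [Finset.not_nonempty_iff_eq_empty] at h
    have := h1 x
    rw [h, Finset.sum_empty] at this
    linarith
  obtain ⟨y, -, hy⟩ := Finset.exists_max_image Finset.univ
    (fun y => (A.filter (fun x => r x y)).card) hY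
  refine ⟨y, ?_⟩
  calc (A.card : ℝ) = ∑ x ∈ A, (1 : ℝ) := by simp
    _ ≤ ∑ x ∈ A, ∑ y : Y, if r x y then α y else 0 := Finset.sum_le_sum fun x _ => h1 x
    _ = ∑ z : Y, ((A.filter (fun x => r x z)).card : ℝ) * α z := by
        rw [Finset.sum_comm]
        refine Finset.sum_congr rfl fun z _ => ?_
        rw [← Finset.sum_filter, Finset.sum_const, nsmul_eq_mul]
    _ ≤ ∑ z : Y, ((A.filter (fun x => r x y)).card : ℝ) * α z := by
        refine Finset.sum_le_sum fun z hz => ?_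
        exact mul_le_mul_of_nonneg_right (by exact_mod_cast hy z hz) (h0 z)
    _ = _ := by rw [Finset.mul_sum]

/-- The total weight of a fractional cover is at least one when there is something to cover. -/
lemma one_le_sum_of_fractional_cover {X Y : Type*} [Fintype Y] (r : X → Y → Prop) (α : Y → ℝ)
    (h0 : ∀ y, 0 ≤ α y) (h1 : ∀ x : X, 1 ≤ ∑ y : Y, if r x y then α y else 0) (x : X) :
    1 ≤ ∑ y, α y := by
  refine (h1 x).trans (Finset.sum_le_sum fun y _ => ?_)
  split_ifs
  · exact le_rfl
  · exact h0 y

/-- Greedy rounding of a fractional cover, by strong induction on the uncovered set `A`. -/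
lemma exists_greedy_cover {X Y : Type*} [Fintype Y] (r : X → Y → Prop) (α : Y → ℝ)
    (h0 : ∀ y, 0 ≤ α y) (h1 : ∀ x : X, 1 ≤ ∑ y : Y, if r x y then α y else 0)
    (A : Finset X) (hA : A.Nonempty) :
    ∃ S : Finset Y, (∀ x ∈ A, ∃ y ∈ S, r x y) ∧
      (S.card : ℝ) ≤ 1 + (∑ y, α y) * Real.log A.card := by
  induction A using Finset.strongInduction with
  | H A ih =>
    obtain ⟨y, hy⟩ := exists_card_le_mul r α h0 h1 A hA
    obtain ⟨x₀, hx₀⟩ := hA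
    have hc := one_le_sum_of_fractional_cover r α h0 h1 x₀
    set c := ∑ y, α y
    have hcard := Finset.card_filter_add_card_filter_not (s := A) (fun x => r x y)
    set B := A.filter (fun x => ¬ r x y)
    have hApos : (0 : ℝ) < A.card := by exact_mod_cast Finset.card_pos.2 ⟨x₀, hx₀⟩
    have hcardR : ((A.filter (fun x => r x y)).card : ℝ) + B.card = A.card := by
      exact_mod_cast hcard
    by_cases hB : B.Nonempty
    · have hBpos : (0 : ℝ) < B.card := by exact_mod_cast Finset.card_pos.2 hB
      have hBA : B ⊂ A := by
        refine (Finset.filter_subset _ _).ssubset_of_ne fun h => ?_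
        have : B.card = A.card := congrArg Finset.card h
        rw [this] at hcardR
        have h2 : ((A.filter (fun x => r x y)).card : ℝ) = 0 := by linarith
        rw [h2] at hy
        linarith
      obtain ⟨S, hS, hScard⟩ := ih B hBA hB
      refine ⟨insert y S, fun x hx => ?_, ?_⟩
      · by_cases hxy : r x y
        · exact ⟨y, Finset.mem_insert_self _ _, hxy⟩
        · obtain ⟨z, hz, hxz⟩ := hS x (Finset.mem_filter.2 ⟨hx, hxy⟩)
          exact ⟨z, Finset.mem_insert_of_mem hz, hxz⟩
      · have h2 : ((insert y S).card : ℝ) ≤ S.card + 1 := by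
          exact_mod_cast Finset.card_insert_le y S
        -- `log t ≤ t - 1` at `t = |B| / |A| ≤ 1 - 1 / c`
        have h3 := Real.log_le_sub_one_of_pos (div_pos hBpos hApos)
        rw [Real.log_div hBpos.ne' hApos.ne'] at h3
        have h4 : c * ((B.card : ℝ) / A.card - 1) ≤ -1 := by
          rw [div_sub_one hApos.ne', mul_div_assoc', div_le_iff₀ hApos]
          nlinarith
        have h5 := mul_le_mul_of_nonneg_left h3 (zero_le_one.trans hc)
        nlinarith
    · refine ⟨{y}, fun x hx => ⟨y, Finset.mem_singleton_self _, ?_⟩, ?_⟩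
      · by_contra hxy
        exact hB ⟨x, Finset.mem_filter.2 ⟨hx, hxy⟩⟩
      · have : 0 ≤ c * Real.log A.card :=
          mul_nonneg (zero_le_one.trans hc) (Real.log_natCast_nonneg _)
        simpa using this

lemma IP_le_card {X Y : Type*} [Fintype Y] (r : X → Y → Prop) (S : Finset Y)
    (hS : ∀ x : X, ∃ y ∈ S, r x y) : IP X Y r ≤ S.card :=
  Nat.sInf_le ⟨S, hS, rfl⟩

lemma LP_nonneg {X Y : Type*} [Fintype X] [Fintype Y] (r : X → Y → Prop) : 0 ≤ LP X Y r := by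
  refine Real.sInf_nonneg ?_
  rintro c ⟨α, h0, -, rfl⟩
  exact Finset.sum_nonneg fun y _ => h0 y

/-- The logarithmic bound on the integrality gap. For empty `X` it holds because `IP X Y r = 0`,
as the empty set is then a cover. -/
lemma IP_le_log_mul_LP {X Y : Type*} [Fintype X] [Fintype Y] (r : X → Y → Prop)
    (hfeas : ∀ x, ∃ y, r x y) :
    (IP X Y r : ℝ) ≤ (1 + Real.log (Fintype.card X)) * LP X Y r := by
  have hlog : 0 ≤ Real.log (Fintype.card X) := Real.log_natCast_nonneg _
  rcases isEmpty_or_nonempty X with hX | ⟨⟨x₀⟩⟩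
  · have h : IP X Y r ≤ 0 := IP_le_card r ∅ fun x => (hX.false x).elim
    have h' : (IP X Y r : ℝ) ≤ 0 := by exact_mod_cast h
    exact h'.trans (mul_nonneg (by linarith) (LP_nonneg r))
  · rw [← div_le_iff₀' (by linarith)]
    refine le_csInf ?_ ?_
    -- By feasibility the constant function `1` is a fractional cover.
    · refine ⟨_, fun _ => 1, fun _ => zero_le_one, fun x => ?_, rfl⟩
      obtain ⟨y, hy⟩ := hfeas x
      have := Finset.single_le_sum (f := fun y => if r x y then (1 : ℝ) else 0)
        (fun z _ => by positivity) (Finset.mem_univ y)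
      simpa [hy] using this
    · rintro c ⟨α, h0, h1, rfl⟩
      obtain ⟨S, hS, hcard⟩ := exists_greedy_cover r α h0 h1 Finset.univ ⟨x₀, Finset.mem_univ _⟩
      have hIP : (IP X Y r : ℝ) ≤ S.card := by
        exact_mod_cast IP_le_card r S fun x => hS x (Finset.mem_univ _)
      have hc := one_le_sum_of_fractional_cover r α h0 h1 x₀
      rw [Finset.card_univ] at hcard
      rw [div_le_iff₀' (by linarith)]
      linarith

lemma exists_one_add_mul_le_pow (L ε : ℝ) (hL : 0 ≤ L) (hε : 0 < ε) :
    ∃ N : ℕ, ∀ n : ℕ, N < n → 1 + n * L ≤ (1 + ε) ^ n := by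
  have ht := tendsto_pow_const_div_const_pow_of_one_lt 1 (show 1 < 1 + ε by linarith)
  obtain ⟨N, hN⟩ := Filter.eventually_atTop.1
    (ht.eventually (gt_mem_nhds (show (0 : ℝ) < 1 / (1 + L) by positivity)))
  refine ⟨N, fun n hn => ?_⟩
  have h := hN n hn.le
  rw [div_lt_div_iff₀ (by positivity) (by positivity)] at h
  have hn1 : (1 : ℝ) ≤ n := by exact_mod_cast (Nat.zero_le N).trans_lt hn
  nlinarith

/-- For feasible bipartite graphs `G₁, …, G_r` and every `ε > 0`, there exists `N` such
that for all `n > N` and every sequence `s ∈ [r]ⁿ`,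
`IP(G_{s₁} ⊗ ⋯ ⊗ G_{s_n}) ≤ (1+ε)ⁿ · LP(G_{s₁} ⊗ ⋯ ⊗ G_{s_n})`. -/
theorem IP_seqTensor_le_LP_seqTensor {ι : Type*} [Fintype ι]
    {X Y : ι → Type*} [∀ i, Fintype (X i)] [∀ i, Fintype (Y i)]
    (r : ∀ i, X i → Y i → Prop)
    (hfeas : ∀ i, ∀ x : X i, ∃ y : Y i, r i x y) :
    ∀ ε : ℝ, 0 < ε → ∃ N : ℕ, ∀ n : ℕ, N < n → ∀ s : Fin n → ι,
      (IP (∀ k, X (s k)) (∀ k, Y (s k)) (seqTensorRel r s) : ℝ) ≤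
        (1 + ε) ^ n * LP (∀ k, X (s k)) (∀ k, Y (s k)) (seqTensorRel r s) := by
  intro ε hε
  set M : ℕ := ∑ i, Fintype.card (X i)
  obtain ⟨N, hN⟩ := exists_one_add_mul_le_pow (Real.log M) ε (Real.log_natCast_nonneg _) hε
  refine ⟨N, fun n hn s => ?_⟩
  have hfeas' : ∀ x, ∃ y, seqTensorRel r s x y := fun x => by
    choose y hy using fun k => hfeas (s k) (x k)
    exact ⟨y, hy⟩
  refine (IP_le_log_mul_LP _ hfeas').trans
    (mul_le_mul_of_nonneg_right (le_trans ?_ (hN n hn)) (LP_nonneg _))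
  have hcard : Fintype.card (∀ k, X (s k)) ≤ M ^ n := by
    rw [Fintype.card_pi]
    refine (Finset.prod_le_pow_card _ _ M fun k _ => ?_).trans (by simp)
    exact Finset.single_le_sum (f := fun i => Fintype.card (X i)) (fun _ _ => Nat.zero_le _)
      (Finset.mem_univ (s k))
  rw [← Real.log_pow]
  rcases Nat.eq_zero_or_pos (Fintype.card (∀ k, X (s k))) with h0 | hpos
  -- `log 0 = 0`, so an empty left part causes no trouble.
  · have : 0 ≤ Real.log ((M : ℝ) ^ n) := by exact_mod_cast Real.log_natCast_nonneg (M ^ n)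
    rw [h0, Nat.cast_zero, Real.log_zero]
    linarith
  · have := Real.log_le_log (by exact_mod_cast hpos : (0 : ℝ) < Fintype.card (∀ k, X (s k)))
      (by exact_mod_cast hcard : (Fintype.card (∀ k, X (s k)) : ℝ) ≤ (M : ℝ) ^ n)
    linarith
end

section
/- Let F be a finite field and K₁ : F^{r₁} → F^c, K₃ : F^{s₁} → F^c, K₄ : F^{s₂} → F^c linear maps with range(K₁) ⊆ range(K₃) + range(K₄) and range(K₄) ⊆ range(K₁). Let G be the bipartite graph with left part X = F^{r₁}, right part Y = F^{s₂}, and x ~ y if and only if there exists y₁ ∈ F^{s₁} with K₁x + K₃y₁ + K₄y = 0. Then IP(G) = LP(G) = |F|^d, where d = f(K₁,K₃,K₄;F^{r₁}). In particular, linear coordination strategies achieve the (nonlinear) one-shot coordination capacity and block coding does not help. -/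
/-!
Modulo `range K₃`, the relation `x ~ y` says that the classes of `-K₁ x` and `K₄ y` agree, and the
two range hypotheses make `x ↦ [-K₁ x]` and `y ↦ [K₄ y]` surjections onto the same finite space
`A = range K₄ / (range K₃ ⊓ range K₄)`, realized as the image of `range K₄` in `F^c / range K₃`.
So the graph is a disjoint union of `|A|` nonempty complete bipartite graphs. A cover, integral or
fractional, must spend at least one unit in each block, and one vertex per block suffices; hence
`IP = LP = |A|` (`IP_eq_card`, `LP_eq_card`). Finally `|A| = |F| ^ dim A`, and `dim A` is the minimum
defining `fMin`: an admissible `U` surjects onto `A`, and a linear section of `range K₄ → A` yields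
an admissible `U` of dimension exactly `dim A` (`fMin_eq_finrank`).
-/


open scoped BigOperators
open Classical

/-- `fMin K₁ K₃ K₄ V` is the minimum of `dim U` over all subspaces `U` of `F^c`
satisfying `K₁(V) ⊆ range(K₃) + U` and `U ⊆ range(K₄)`. -/
noncomputable def fMin {F : Type*} [Field F] {r₁ s₁ s₂ c : ℕ}
    (K₁ : (Fin r₁ → F) →ₗ[F] (Fin c → F)) (K₃ : (Fin s₁ → F) →ₗ[F] (Fin c → F))
    (K₄ : (Fin s₂ → F) →ₗ[F] (Fin c → F)) (V : Submodule F (Fin r₁ → F)) : ℕ :=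
  sInf {d : ℕ | ∃ U : Submodule F (Fin c → F),
    V.map K₁ ≤ LinearMap.range K₃ ⊔ U ∧ U ≤ LinearMap.range K₄ ∧
    Module.finrank F ↥U = d}

/-- The cover number of a disjoint union of nonempty complete bipartite graphs, indexed by `A`,
is the number of blocks. -/
lemma IP_eq_card {X Y A : Type*} [Fintype Y] [Fintype A] (r : X → Y → Prop)
    (p : X → A) (q : Y → A) (hp : p.Surjective) (hq : q.Surjective)
    (hr : ∀ x y, r x y ↔ p x = q y) : IP X Y r = Fintype.card A := by
  apply IsLeast.csInf_eq
  constructor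
  · refine ⟨Finset.univ.image (Function.surjInv hq), fun x => ?_, ?_⟩
    · exact ⟨Function.surjInv hq (p x), Finset.mem_image_of_mem _ (Finset.mem_univ _),
        (hr _ _).2 (Function.surjInv_eq hq _).symm⟩
    · rw [Finset.card_image_of_injective _ (Function.injective_surjInv hq), Finset.card_univ]
  · rintro n ⟨S, hS, rfl⟩
    have h : S.image q = Finset.univ := by
      refine Finset.eq_univ_iff_forall.2 fun a => ?_
      obtain ⟨x, rfl⟩ := hp a
      obtain ⟨y, hy, hxy⟩ := hS x
      exact Finset.mem_image.2 ⟨y, hy, ((hr _ _).1 hxy).symm⟩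
    rw [← Finset.card_univ, ← h]
    exact Finset.card_image_le

/-- The fractional cover number of a disjoint union of nonempty complete bipartite graphs, indexed
by `A`, is the number of blocks. -/
lemma LP_eq_card {X Y A : Type*} [Fintype X] [Fintype Y] [Fintype A] (r : X → Y → Prop)
    (p : X → A) (q : Y → A) (hp : p.Surjective) (hq : q.Surjective)
    (hr : ∀ x y, r x y ↔ p x = q y) : LP X Y r = Fintype.card A := by
  apply IsLeast.csInf_eq
  constructor
  · -- Put weight one on a chosen representative of each block.
    refine ⟨fun y => if y ∈ Finset.univ.image (Function.surjInv hq) then 1 else 0,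
      fun y => by positivity, fun x => ?_, ?_⟩
    · have key := Finset.single_le_sum (s := Finset.univ)
        (f := fun y => if r x y then
          (if y ∈ Finset.univ.image (Function.surjInv hq) then (1 : ℝ) else 0) else 0)
        (fun y _ => by positivity) (Finset.mem_univ (Function.surjInv hq (p x)))
      have hx : r x (Function.surjInv hq (p x)) := (hr _ _).2 (Function.surjInv_eq hq _).symm
      simpa [hx] using key
    · rw [Finset.sum_ite_mem, Finset.univ_inter, Finset.sum_const, nsmul_one,
        Finset.card_image_of_injective _ (Function.injective_surjInv hq), Finset.card_univ]
  · rintro c ⟨α, -, hα, rfl⟩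
    rw [← Finset.sum_fiberwise Finset.univ q α]
    have h : ∀ a : A, (1 : ℝ) ≤ ∑ y with q y = a, α y := by
      intro a
      obtain ⟨x, rfl⟩ := hp a
      have hx := hα x
      simp only [hr] at hx
      rw [Finset.sum_filter]
      simpa only [eq_comm] using hx
    calc (Fintype.card A : ℝ) = ∑ _a : A, (1 : ℝ) := by simp
      _ ≤ _ := Finset.sum_le_sum fun a _ => h a

/-- The minimum in `fMin` (with `V = ⊤`) is the dimension of the image of `range K₄` in
`F^c / range K₃`. -/
lemma fMin_eq_finrank {F : Type*} [Field F] {r₁ s₁ s₂ c : ℕ}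
    (K₁ : (Fin r₁ → F) →ₗ[F] (Fin c → F)) (K₃ : (Fin s₁ → F) →ₗ[F] (Fin c → F))
    (K₄ : (Fin s₂ → F) →ₗ[F] (Fin c → F))
    (h₁ : LinearMap.range K₁ ≤ LinearMap.range K₃ ⊔ LinearMap.range K₄)
    (h₂ : LinearMap.range K₄ ≤ LinearMap.range K₁) :
    fMin K₁ K₃ K₄ ⊤ =
      Module.finrank F ((LinearMap.range K₄).map (LinearMap.range K₃).mkQ) := by
  apply IsLeast.csInf_eq
  constructor
  · obtain ⟨s, hs⟩ := ((LinearMap.range K₃).mkQ.submoduleMap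
      (LinearMap.range K₄)).exists_rightInverse_of_surjective
      (LinearMap.range_eq_top.2 (LinearMap.submoduleMap_surjective _ _))
    have hs' : ∀ a, (LinearMap.range K₃).mkQ (s a : Fin c → F) = a := fun a =>
      congrArg Subtype.val (LinearMap.congr_fun hs a)
    refine ⟨LinearMap.range ((LinearMap.range K₄).subtype ∘ₗ s), ?_, ?_, ?_⟩
    · rw [Submodule.map_top]
      refine h₁.trans (sup_le le_sup_left ?_)
      rw [← Submodule.comap_map_mkQ]
      intro w hw
      exact ⟨_, ⟨⟨_, Submodule.mem_map_of_mem hw⟩, rfl⟩, hs' _⟩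
    · rintro _ ⟨a, rfl⟩
      exact (s a).2
    · apply LinearMap.finrank_range_of_inj
      intro a b hab
      apply Subtype.ext
      rw [← hs' a, ← hs' b]
      exact congrArg _ hab
  · rintro d ⟨U, hU, -, rfl⟩
    rw [Submodule.map_top, ← Submodule.comap_map_mkQ] at hU
    exact (Submodule.finrank_mono (Submodule.map_le_iff_le_comap.2 (h₂.trans hU))).trans
      (Submodule.finrank_map_le _ _)

/-- For a finite field `F` and linear maps with `range K₁ ⊆ range K₃ + range K₄` and
`range K₄ ⊆ range K₁`, the coordination bipartite graph `G` (with `x ~ y` iff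
`∃ y₁, K₁x + K₃y₁ + K₄y = 0`) satisfies `IP(G) = LP(G) = |F|^d` where
`d = fMin K₁ K₃ K₄ ⊤`: linear strategies are optimal and block coding does not help. -/
theorem linear_coordination_IP_eq_LP {F : Type*} [Field F] [Fintype F] {r₁ s₁ s₂ c : ℕ}
    (K₁ : (Fin r₁ → F) →ₗ[F] (Fin c → F)) (K₃ : (Fin s₁ → F) →ₗ[F] (Fin c → F))
    (K₄ : (Fin s₂ → F) →ₗ[F] (Fin c → F))
    (h₁ : LinearMap.range K₁ ≤ LinearMap.range K₃ ⊔ LinearMap.range K₄)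
    (h₂ : LinearMap.range K₄ ≤ LinearMap.range K₁) :
    IP (Fin r₁ → F) (Fin s₂ → F)
        (fun x y => ∃ y₁ : Fin s₁ → F, K₁ x + K₃ y₁ + K₄ y = 0) =
      Fintype.card F ^ (fMin K₁ K₃ K₄ ⊤) ∧
    LP (Fin r₁ → F) (Fin s₂ → F)
        (fun x y => ∃ y₁ : Fin s₁ → F, K₁ x + K₃ y₁ + K₄ y = 0) =
      (Fintype.card F : ℝ) ^ (fMin K₁ K₃ K₄ ⊤) := by
  set R := LinearMap.range K₃ with hR
  let A := (LinearMap.range K₄).map R.mkQ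
  have hA : (LinearMap.range K₁).map R.mkQ ≤ A := by
    rw [Submodule.map_le_iff_le_comap, Submodule.comap_map_mkQ]
    exact h₁
  let p : (Fin r₁ → F) → A := fun x =>
    ⟨-R.mkQ (K₁ x), A.neg_mem (hA (Submodule.mem_map_of_mem ⟨x, rfl⟩))⟩
  let q : (Fin s₂ → F) → A := fun y => ⟨R.mkQ (K₄ y), Submodule.mem_map_of_mem ⟨y, rfl⟩⟩
  have hq : q.Surjective := by
    rintro ⟨_, _, ⟨y, rfl⟩, rfl⟩
    exact ⟨y, rfl⟩
  have hp : p.Surjective := by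
    rintro ⟨_, w, hw, rfl⟩
    obtain ⟨x, rfl⟩ := h₂ hw
    exact ⟨-x, Subtype.ext (by simp [p])⟩
  have hr : ∀ x y, (∃ y₁ : Fin s₁ → F, K₁ x + K₃ y₁ + K₄ y = 0) ↔ p x = q y := by
    intro x y
    have h : p x = q y ↔ -K₁ x - K₄ y ∈ R := by
      rw [Subtype.ext_iff, ← Submodule.Quotient.eq]
      exact Iff.rfl
    rw [h, hR, LinearMap.mem_range]
    refine exists_congr fun y₁ => ?_
    rw [← sub_eq_zero (a := K₃ y₁)]
    constructor <;> intro h' <;> rw [← h'] <;> abel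
  have : Finite A := Finite.of_surjective q hq
  have := Fintype.ofFinite A
  have hcard : Fintype.card A = Fintype.card F ^ fMin K₁ K₃ K₄ ⊤ := by
    rw [fMin_eq_finrank K₁ K₃ K₄ h₁ h₂]
    exact Module.card_eq_pow_finrank
  exact ⟨(IP_eq_card _ p q hp hq hr).trans hcard,
    (LP_eq_card _ p q hp hq hr).trans (by rw [hcard, Nat.cast_pow])⟩
end

section
/- Let F be a field, K₁ : F^{r₁} → F^c, K₄ : F^{s₁} → F^c, K₅ : F^{s₂} → F^c, K₆ : F^{s₃} → F^c linear maps, and V ⊆ F^{r₁} a subspace. For natural numbers t₁, t₂, there exist linear maps S : F^{r₁} → F^{t₁}, T : F^{r₁} → F^{t₂}, B : F^{r₁} → F^{s₁}, C : F^{t₁} → F^{s₂}, D : F^{t₂} → F^{s₃} satisfying K₁v + K₄(Bv) + K₅(C(Sv)) + K₆(D(Tv)) = 0 for all v ∈ V, if and only if there exist subspaces U₁ ⊆ range(K₅) and U₂ ⊆ range(K₆) with dim U₁ ≤ t₁, dim U₂ ≤ t₂, and K₁(V) ⊆ range(K₄) + U₁ + U₂. -/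
/-!
If coordination is achieved, `U₁ = range (K₅ ∘ C)` and `U₂ = range (K₆ ∘ D)` work, since these maps
factor through spaces of dimension `t₁` and `t₂`. Conversely, linear maps over a field lift along any
map whose range contains theirs: lifting `K₁` on `V` along `F^s₁ × U₁ × U₂ → F^c`,
`(x, u₁, u₂) ↦ K₄ x + u₁ + u₂`, makes the decomposition of `K₁ v` linear in `v`. The components in
`U₁` and `U₂` are then the messages, in coordinates on `Uᵢ`, and the decoders `C`, `D` pull `Uᵢ` back
along `K₅`, `K₆`. A sign change and an extension from `V` to the whole space finish the proof.
-/

/-- A linear map from a vector space lifts along any linear map whose range contains its own. -/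
lemma exists_lift_of_range_le {F M N P : Type*} [Field F] [AddCommGroup M] [Module F M]
    [AddCommGroup N] [Module F N] [AddCommGroup P] [Module F P]
    (f : M →ₗ[F] P) (g : N →ₗ[F] P) (h : LinearMap.range f ≤ LinearMap.range g) :
    ∃ l : M →ₗ[F] N, ∀ x, g (l x) = f x := by
  obtain ⟨l, hl⟩ := Module.projective_lifting_property g.rangeRestrict
    (f.codRestrict (LinearMap.range g) fun x => h ⟨x, rfl⟩) g.surjective_rangeRestrict
  exact ⟨l, fun x => congrArg Subtype.val (LinearMap.congr_fun hl x)⟩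

/-- A subspace `U` of `range K` with `dim U ≤ t` can be encoded in `F^t` and decoded through `K`. -/
lemma exists_encode_decode {F P N : Type*} [Field F] [AddCommGroup P] [Module F P]
    [FiniteDimensional F P] [AddCommGroup N] [Module F N] (K : N →ₗ[F] P) (U : Submodule F P)
    (hU : U ≤ LinearMap.range K) (t : ℕ) (ht : Module.finrank F U ≤ t) :
    ∃ (e : U →ₗ[F] (Fin t → F)) (C : (Fin t → F) →ₗ[F] N), ∀ u : U, K (C (e u)) = u := by
  obtain ⟨e, he⟩ : ∃ e : U →ₗ[F] (Fin t → F), Function.Injective e :=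
    finrank_le_iff_exists_linearMap.1 (by simpa using ht)
  obtain ⟨g, hg⟩ := e.exists_leftInverse_of_injective (LinearMap.ker_eq_bot.2 he)
  obtain ⟨s, hs⟩ := exists_lift_of_range_le U.subtype K (by simpa using hU)
  refine ⟨e, s ∘ₗ g, fun u => ?_⟩
  have hgu : g (e u) = u := LinearMap.congr_fun hg u
  simp [hgu, hs]

/-- Broadcast-topology linear coordination: linear maps `S, T, B, C, D` with
`K₁v + K₄(Bv) + K₅(C(Sv)) + K₆(D(Tv)) = 0` on `V` exist at rates `(t₁, t₂)` iff there
are subspaces `U₁ ⊆ range K₅`, `U₂ ⊆ range K₆` with `dim U₁ ≤ t₁`, `dim U₂ ≤ t₂` and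
`K₁(V) ⊆ range K₄ + U₁ + U₂`. -/
theorem linear_coordination_broadcast {F : Type*} [Field F] {r₁ s₁ s₂ s₃ c : ℕ}
    (K₁ : (Fin r₁ → F) →ₗ[F] (Fin c → F)) (K₄ : (Fin s₁ → F) →ₗ[F] (Fin c → F))
    (K₅ : (Fin s₂ → F) →ₗ[F] (Fin c → F)) (K₆ : (Fin s₃ → F) →ₗ[F] (Fin c → F))
    (V : Submodule F (Fin r₁ → F)) (t₁ t₂ : ℕ) :
    (∃ (S : (Fin r₁ → F) →ₗ[F] (Fin t₁ → F)) (T : (Fin r₁ → F) →ₗ[F] (Fin t₂ → F))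
        (B : (Fin r₁ → F) →ₗ[F] (Fin s₁ → F)) (C : (Fin t₁ → F) →ₗ[F] (Fin s₂ → F))
        (D : (Fin t₂ → F) →ₗ[F] (Fin s₃ → F)),
        ∀ v ∈ V, K₁ v + K₄ (B v) + K₅ (C (S v)) + K₆ (D (T v)) = 0) ↔
      (∃ (U₁ U₂ : Submodule F (Fin c → F)),
        U₁ ≤ LinearMap.range K₅ ∧ U₂ ≤ LinearMap.range K₆ ∧
        Module.finrank F ↥U₁ ≤ t₁ ∧ Module.finrank F ↥U₂ ≤ t₂ ∧
        V.map K₁ ≤ LinearMap.range K₄ ⊔ U₁ ⊔ U₂) := by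
  constructor
  · rintro ⟨S, T, B, C, D, h⟩
    refine ⟨LinearMap.range (K₅ ∘ₗ C), LinearMap.range (K₆ ∘ₗ D),
      LinearMap.range_comp_le_range _ _, LinearMap.range_comp_le_range _ _,
      by simpa using LinearMap.finrank_range_le (K₅ ∘ₗ C),
      by simpa using LinearMap.finrank_range_le (K₆ ∘ₗ D), ?_⟩
    rintro _ ⟨v, hv, rfl⟩
    have hK : K₁ v = -(K₄ (B v) + (K₅ ∘ₗ C) (S v) + (K₆ ∘ₗ D) (T v)) := by
      rw [eq_neg_iff_add_eq_zero, ← h v hv]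
      simp only [LinearMap.comp_apply]
      abel
    rw [hK]
    exact neg_mem (Submodule.add_mem_sup (Submodule.add_mem_sup ⟨_, rfl⟩ ⟨_, rfl⟩) ⟨_, rfl⟩)
  · rintro ⟨U₁, U₂, hU₁, hU₂, hd₁, hd₂, hV⟩
    obtain ⟨e₁, C, hC⟩ := exists_encode_decode K₅ U₁ hU₁ t₁ hd₁
    obtain ⟨e₂, D, hD⟩ := exists_encode_decode K₆ U₂ hU₂ t₂ hd₂
    obtain ⟨l, hl⟩ := exists_lift_of_range_le (K₁ ∘ₗ V.subtype)
      ((K₄.coprod U₁.subtype).coprod U₂.subtype)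
      (by simpa [LinearMap.range_coprod, LinearMap.range_comp] using hV)
    obtain ⟨m, hm⟩ := LinearMap.exists_extend l
    refine ⟨-(e₁ ∘ₗ LinearMap.snd F _ _ ∘ₗ LinearMap.fst F _ _ ∘ₗ m),
      -(e₂ ∘ₗ LinearMap.snd F _ _ ∘ₗ m),
      -(LinearMap.fst F _ _ ∘ₗ LinearMap.fst F _ _ ∘ₗ m), C, D, fun v hv => ?_⟩
    have hmv : m v = l ⟨v, hv⟩ := LinearMap.congr_fun hm ⟨v, hv⟩
    have hlv : K₄ (m v).1.1 + (m v).1.2 + (m v).2 = K₁ v := by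
      simpa [hmv] using hl ⟨v, hv⟩
    simp only [LinearMap.neg_apply, LinearMap.comp_apply, map_neg, LinearMap.fst_apply,
      LinearMap.snd_apply, hC, hD, ← hlv]
    abel
end

section
/- Let F be a field, K₁ : F^{r₁} → F^c, K₂ : F^{r₂} → F^c, K₄ : F^{s₁} → F^c, K₅ : F^{s₂} → F^c, K₆ : F^{s₃} → F^c linear maps, and V₁ ⊆ F^{r₁}, V₂ ⊆ F^{r₂} subspaces. For natural numbers t₁, t₂, there exist linear maps A : F^{r₁} → F^{s₁}, B : F^{r₂} → F^{s₂}, S : F^{r₁} → F^{t₁}, T : F^{r₂} → F^{t₂}, C : F^{t₁} → F^{s₃}, D : F^{t₂} → F^{s₃} satisfying K₁x₁ + K₂x₂ + K₄(Ax₁) + K₅(Bx₂) + K₆(C(Sx₁) + D(Tx₂)) = 0 for all x₁ ∈ V₁ and x₂ ∈ V₂, if and only if there exist subspaces U₁, U₂ ⊆ range(K₆) with dim U₁ ≤ t₁, dim U₂ ≤ t₂, K₁(V₁) ⊆ range(K₄) + U₁, and K₂(V₂) ⊆ range(K₅) + U₂. -/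
/-!
Setting `x₂ = 0` or `x₁ = 0` splits the joint constraint into one constraint per transmitting
node, and the sum of the two recovers it; so everything reduces to a single node
(`single_node_iff`). There, `U` is the image of `K₆ ∘ C`, the space of corrections that node three
can apply on the strength of a `t`-dimensional message. Conversely, a subspace `U ⊆ range K₆` of
dimension at most `t` is the image of `K₆ ∘ C` for some `C : F^t → F^s`, and `K` restricted to `V`
then factors through `(y, m) ↦ K₄ y + K₆ (C m)`, whose range is `range K₄ + U`. Both steps use
`exists_comp_eq_of_range_le`.
-/

/-- Over a field, a linear map factors through any linear map with a larger range. -/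
theorem exists_comp_eq_of_range_le {F M N P : Type*} [Field F] [AddCommGroup M] [Module F M]
    [AddCommGroup N] [Module F N] [AddCommGroup P] [Module F P]
    (f : M →ₗ[F] P) (g : N →ₗ[F] P) (h : LinearMap.range f ≤ LinearMap.range g) :
    ∃ k : M →ₗ[F] N, g ∘ₗ k = f := by
  obtain ⟨k, hk⟩ := Module.projective_lifting_property g.rangeRestrict
    (f.codRestrict (LinearMap.range g) fun x => h ⟨x, rfl⟩) g.surjective_rangeRestrict
  refine ⟨k, LinearMap.ext fun x => ?_⟩
  exact congrArg Subtype.val (LinearMap.congr_fun hk x)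

theorem exists_range_eq_of_finrank_le {F P : Type*} [Field F] [AddCommGroup P] [Module F P]
    [FiniteDimensional F P] (U : Submodule F P) {t : ℕ} (h : Module.finrank F U ≤ t) :
    ∃ G : (Fin t → F) →ₗ[F] P, LinearMap.range G = U := by
  -- Read off the first `dim U` coordinates as coordinates in a basis of `U`.
  let e := (Module.finBasis F U).equivFun
  let p := LinearMap.funLeft F F (Fin.castLE h)
  have hp : Function.Surjective p :=
    LinearMap.funLeft_surjective_of_injective F F _ (Fin.castLE_injective h)
  refine ⟨U.subtype ∘ₗ e.symm.toLinearMap ∘ₗ p, ?_⟩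
  rw [LinearMap.range_comp, LinearMap.range_comp, LinearMap.range_eq_top.2 hp,
    Submodule.map_top, LinearEquiv.range, Submodule.map_top, Submodule.range_subtype]

/-- The coordination problem for one transmitting node with message dimension `t`. -/
theorem single_node_iff {F : Type*} [Field F] {r s s' c : ℕ}
    (K : (Fin r → F) →ₗ[F] (Fin c → F)) (K₄ : (Fin s → F) →ₗ[F] (Fin c → F))
    (K₆ : (Fin s' → F) →ₗ[F] (Fin c → F)) (V : Submodule F (Fin r → F)) (t : ℕ) :
    (∃ (A : (Fin r → F) →ₗ[F] (Fin s → F)) (S : (Fin r → F) →ₗ[F] (Fin t → F))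
        (C : (Fin t → F) →ₗ[F] (Fin s' → F)), ∀ x ∈ V, K x + K₄ (A x) + K₆ (C (S x)) = 0) ↔
      ∃ U : Submodule F (Fin c → F), U ≤ LinearMap.range K₆ ∧ Module.finrank F U ≤ t ∧
        V.map K ≤ LinearMap.range K₄ ⊔ U := by
  constructor
  · rintro ⟨A, S, C, h⟩
    refine ⟨LinearMap.range (K₆ ∘ₗ C), LinearMap.range_comp_le_range C K₆,
      (LinearMap.finrank_range_le _).trans (by simp), ?_⟩
    rintro _ ⟨x, hx, rfl⟩
    have hK : K x = K₄ (-A x) + (K₆ ∘ₗ C) (-S x) := by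
      have := h x hx
      simp only [LinearMap.comp_apply, map_neg]
      linear_combination this
    rw [hK]
    exact Submodule.add_mem_sup ⟨_, rfl⟩ ⟨_, rfl⟩
  · rintro ⟨U, hU, ht, hV⟩
    obtain ⟨G, hG⟩ := exists_range_eq_of_finrank_le U ht
    obtain ⟨C, hC⟩ := exists_comp_eq_of_range_le G K₆ (hG.trans_le hU)
    obtain ⟨k, hk⟩ := exists_comp_eq_of_range_le (K ∘ₗ V.subtype) (K₄.coprod G) (by
      rw [LinearMap.range_coprod, hG, LinearMap.range_comp, Submodule.range_subtype]
      exact hV)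
    obtain ⟨k', hk'⟩ := LinearMap.exists_extend k
    refine ⟨-(LinearMap.fst F _ _ ∘ₗ k'), -(LinearMap.snd F _ _ ∘ₗ k'), C, fun x hx => ?_⟩
    have h1 : K₄ (k ⟨x, hx⟩).1 + G (k ⟨x, hx⟩).2 = K x := LinearMap.congr_fun hk ⟨x, hx⟩
    have h2 : k' x = k ⟨x, hx⟩ := LinearMap.congr_fun hk' ⟨x, hx⟩
    have h3 : ∀ m, K₆ (C m) = G m := LinearMap.congr_fun hC
    simp only [LinearMap.neg_apply, LinearMap.comp_apply, LinearMap.fst_apply,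
      LinearMap.snd_apply, map_neg, h3, h2, ← h1]
    abel

/-- MAC-topology linear coordination: linear maps `A, B, S, T, C, D` with
`K₁x₁ + K₂x₂ + K₄(Ax₁) + K₅(Bx₂) + K₆(C(Sx₁) + D(Tx₂)) = 0` for all `x₁ ∈ V₁`,
`x₂ ∈ V₂` exist at rates `(t₁, t₂)` iff there are subspaces `U₁, U₂ ⊆ range K₆` with
`dim U₁ ≤ t₁`, `dim U₂ ≤ t₂`, `K₁(V₁) ⊆ range K₄ + U₁` and `K₂(V₂) ⊆ range K₅ + U₂`. -/
theorem linear_coordination_mac {F : Type*} [Field F] {r₁ r₂ s₁ s₂ s₃ c : ℕ}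
    (K₁ : (Fin r₁ → F) →ₗ[F] (Fin c → F)) (K₂ : (Fin r₂ → F) →ₗ[F] (Fin c → F))
    (K₄ : (Fin s₁ → F) →ₗ[F] (Fin c → F)) (K₅ : (Fin s₂ → F) →ₗ[F] (Fin c → F))
    (K₆ : (Fin s₃ → F) →ₗ[F] (Fin c → F))
    (V₁ : Submodule F (Fin r₁ → F)) (V₂ : Submodule F (Fin r₂ → F)) (t₁ t₂ : ℕ) :
    (∃ (A : (Fin r₁ → F) →ₗ[F] (Fin s₁ → F)) (B : (Fin r₂ → F) →ₗ[F] (Fin s₂ → F))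
        (S : (Fin r₁ → F) →ₗ[F] (Fin t₁ → F)) (T : (Fin r₂ → F) →ₗ[F] (Fin t₂ → F))
        (C : (Fin t₁ → F) →ₗ[F] (Fin s₃ → F)) (D : (Fin t₂ → F) →ₗ[F] (Fin s₃ → F)),
        ∀ x₁ ∈ V₁, ∀ x₂ ∈ V₂,
          K₁ x₁ + K₂ x₂ + K₄ (A x₁) + K₅ (B x₂) + K₆ (C (S x₁) + D (T x₂)) = 0) ↔
      (∃ (U₁ U₂ : Submodule F (Fin c → F)),
        U₁ ≤ LinearMap.range K₆ ∧ U₂ ≤ LinearMap.range K₆ ∧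
        Module.finrank F ↥U₁ ≤ t₁ ∧ Module.finrank F ↥U₂ ≤ t₂ ∧
        V₁.map K₁ ≤ LinearMap.range K₄ ⊔ U₁ ∧
        V₂.map K₂ ≤ LinearMap.range K₅ ⊔ U₂) := by
  constructor
  · rintro ⟨A, B, S, T, C, D, h⟩
    obtain ⟨U₁, h₁, d₁, m₁⟩ := (single_node_iff K₁ K₄ K₆ V₁ t₁).1
      ⟨A, S, C, fun x hx => by simpa using h x hx 0 V₂.zero_mem⟩
    obtain ⟨U₂, h₂, d₂, m₂⟩ := (single_node_iff K₂ K₅ K₆ V₂ t₂).1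
      ⟨B, T, D, fun x hx => by simpa using h 0 V₁.zero_mem x hx⟩
    exact ⟨U₁, U₂, h₁, h₂, d₁, d₂, m₁, m₂⟩
  · rintro ⟨U₁, U₂, h₁, h₂, d₁, d₂, m₁, m₂⟩
    obtain ⟨A, S, C, hA⟩ := (single_node_iff K₁ K₄ K₆ V₁ t₁).2 ⟨U₁, h₁, d₁, m₁⟩
    obtain ⟨B, T, D, hB⟩ := (single_node_iff K₂ K₅ K₆ V₂ t₂).2 ⟨U₂, h₂, d₂, m₂⟩
    refine ⟨A, B, S, T, C, D, fun x₁ hx₁ x₂ hx₂ => ?_⟩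
    rw [map_add]
    linear_combination hA x₁ hx₁ + hB x₂ hx₂
end
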